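/- arXiv:2203.02825 — 2 statements merged into one kernel-verified Lean document; each statement's English description precedes it below -/
import Mathlib

section
/- Define the scalar curvature scal(p) := Ric(T,T)(p) + Σ_{i=3}^n Ric(X_i,X_i)(p) + Ric(Z,Z)(p). Then for every p ∈ ℝⁿ, scal(p) = −(1/2)Σ_{i=3}^n H_i(p)² ≤ 0; moreover scal vanishes identically on ℝⁿ if and only if H_i ≡ 0 for all i = 3, …, n, which holds if and only if the curvature vanishes identically (R(a,b)c ≡ 0 for all smooth vector fields a, b, c), i.e., if and only if g is flat. -/
/-!
The Christoffel map `Γ` is a polynomial in `H` and its first derivatives, bilinear in the two vector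
arguments. Differentiating `∇_b c` by the Leibniz rule shows that `R(a,b)c` is a tensor `Kt`
built from `Γ` and its derivative (`Rcurv_eq`). On the frame `T, Z, X_k` this tensor can be
evaluated explicitly, using that `H` and its derivatives do not depend on `v`. With `c = 1` for `T`
and `c = -1` for `Z`, the planes spanned by `X_k` and `T` or `Z` have sectional curvature
`(c / 2) H_kk + ((c² - 3) / 8) H_k²`, the plane of `T` and `Z` has `(1/4) Σ H_k²`, and the planes
of `X_k` and `X_l` have `0`. Summing over ordered pairs, the terms `H_kk` of `T` and `Z` cancel and
`-Σ H_k² + (1/2) Σ H_k²` is left (`scal_eq`). It vanishes exactly when every `H_k` does; in that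
case `H` depends on `u` alone and the tensor vanishes (`Kt_eq_zero`). Conversely the scalar
curvature is a trace of the curvature, so it vanishes when the curvature does.
-/

noncomputable section

/-- Points of ℝⁿ (dimension `n+3`, so that the dimension is at least 3):
coordinate `0` is `v`, coordinate `1` is `u`, coordinates `2,…,n+2` are the `xⁱ`. -/
abbrev V (n : ℕ) : Type := Fin (n+3) → ℝ

/-- The standard basis vectors. -/
def ee {n : ℕ} (i : Fin (n+3)) : V n := Pi.single i 1

/-- The standard Riemannian dual metric `g`. -/
def gg {n : ℕ} (H : V n → ℝ) (p : V n) (a b : V n) : ℝ :=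
  2 * a 0 * b 0 + H p * (a 0 * b 1 + a 1 * b 0) + (1 + H p ^ 2) / 2 * (a 1 * b 1)
    + ∑ i : Fin (n+3), if 2 ≤ (i : ℕ) then a i * b i else 0

/-- The vector field `T`. -/
def TT {n : ℕ} (H : V n → ℝ) (p : V n) : V n := ((H p + 1) / 2) • ee 0 - ee 1

/-- The vector field `Z`. -/
def ZZ {n : ℕ} (H : V n → ℝ) (p : V n) : V n := ((H p - 1) / 2) • ee 0 - ee 1

/-- The (constant) coordinate vector fields `X_i`. -/
def XX {n : ℕ} (i : Fin (n+3)) : V n → V n := fun _ => ee i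

/-- Partial derivative of `H` in the `i`-th coordinate direction. -/
def Hd {n : ℕ} (H : V n → ℝ) (i : Fin (n+3)) (p : V n) : ℝ := fderiv ℝ H p (ee i)

/-- `H` is independent of the first coordinate `v`. -/
def VIndep {n : ℕ} (H : V n → ℝ) : Prop :=
  ∀ (p : V n) (c : ℝ), H (Function.update p 0 c) = H p

/-- The Lie bracket of vector fields on ℝⁿ. -/
def br {n : ℕ} (a b : V n → V n) (p : V n) : V n :=
  fderiv ℝ b p (a p) - fderiv ℝ a p (b p)

/-- The Christoffel symbols of `g`, as a symmetric bilinear map `Γ_p : ℝⁿ × ℝⁿ → ℝⁿ`.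
Its only nonzero components (indices `v = 0`, `u = 1`, `i = 2, …, n+2`) are
`Γ^u_{vi} = H_i`, `Γ^i_{vu} = −H_i/2`, `Γ^v_{vi} = −(1/2)H·H_i`, `Γ^i_{uu} = −(1/2)H·H_i`,
`Γ^u_{ui} = (1/2)H·H_i`, `Γ^v_{uu} = (1/2)H_u`, `Γ^v_{ui} = −(1/4)(H²−1)H_i`,
together with their symmetric counterparts. -/
def Ga {n : ℕ} (H : V n → ℝ) (p : V n) (a b : V n) : V n := fun j =>
  if (j : ℕ) = 0 then
    (∑ i : Fin (n+3),
        if 2 ≤ (i : ℕ) then (-(1/2) * H p * Hd H i p) * (a 0 * b i + a i * b 0) else 0)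
      + ((1/2) * Hd H 1 p) * (a 1 * b 1)
      + (∑ i : Fin (n+3),
          if 2 ≤ (i : ℕ) then (-(1/4) * ((H p)^2 - 1) * Hd H i p) * (a 1 * b i + a i * b 1)
          else 0)
  else if (j : ℕ) = 1 then
    (∑ i : Fin (n+3), if 2 ≤ (i : ℕ) then (Hd H i p) * (a 0 * b i + a i * b 0) else 0)
      + (∑ i : Fin (n+3),
          if 2 ≤ (i : ℕ) then ((1/2) * H p * Hd H i p) * (a 1 * b i + a i * b 1) else 0)
  else
    (-(1/2) * Hd H j p) * (a 0 * b 1 + a 1 * b 0) + (-(1/2) * H p * Hd H j p) * (a 1 * b 1)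

/-- The connection `(∇_a b)(p) = (Db)_p(a(p)) + Γ_p(a(p), b(p))`. -/
def cd {n : ℕ} (H : V n → ℝ) (a b : V n → V n) (p : V n) : V n :=
  fderiv ℝ b p (a p) + Ga H p (a p) (b p)

/-- The curvature `R(a,b)c = ∇_a ∇_b c − ∇_b ∇_a c − ∇_{[a,b]} c`. -/
def Rcurv {n : ℕ} (H : V n → ℝ) (a b c : V n → V n) (p : V n) : V n :=
  cd H a (cd H b c) p - cd H b (cd H a c) p - cd H (br a b) c p

/-- The Ricci tensor, computed as a trace over the orthonormal frame `T, X_i, Z`. -/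
def Ric {n : ℕ} (H : V n → ℝ) (a b : V n → V n) (p : V n) : ℝ :=
  gg H p (Rcurv H (TT H) a b p) (TT H p)
    + (∑ i : Fin (n+3),
        if 2 ≤ (i : ℕ) then gg H p (Rcurv H (XX i) a b p) (ee i) else 0)
    + gg H p (Rcurv H (ZZ H) a b p) (ZZ H p)

/-- The scalar curvature `scal = Ric(T,T) + Σᵢ Ric(Xᵢ,Xᵢ) + Ric(Z,Z)`. -/
def scal {n : ℕ} (H : V n → ℝ) (p : V n) : ℝ :=
  Ric H (TT H) (TT H) p
    + (∑ i : Fin (n+3), if 2 ≤ (i : ℕ) then Ric H (XX i) (XX i) p else 0)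
    + Ric H (ZZ H) (ZZ H) p


/-! ### The Christoffel symbols as a polynomial bilinear map -/

/-- The pairing `Σᵢ φᵢ xᵢ` over the transverse coordinates `x³, …, xⁿ` only. -/
def tdot {n : ℕ} (φ x : V n) : ℝ := ∑ i : Fin (n+1), φ i.succ.succ * x i.succ.succ

/-- The Christoffel map `Γ(x, y)`, as a function of the value `h` and the gradient `φ` of `H` at
the point; see `Ga_eq`. -/
def Gam {n : ℕ} (h : ℝ) (φ x y : V n) : V n :=
  Fin.cons (-(1/2) * h * (x 0 * tdot φ y + tdot φ x * y 0) + (1/2) * φ 1 * (x 1 * y 1)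
      - (1/4) * (h^2 - 1) * (x 1 * tdot φ y + tdot φ x * y 1))
    (Fin.cons (x 0 * tdot φ y + tdot φ x * y 0 + (1/2) * h * (x 1 * tdot φ y + tdot φ x * y 1))
      fun j => -(1/2) * φ j.succ.succ * (x 0 * y 1 + x 1 * y 0)
        - (1/2) * h * φ j.succ.succ * (x 1 * y 1))

/-- The derivative of `Gam h φ x y` in its parameters `(h, φ)`, in the direction `(η, ψ)`. -/
def dGam {n : ℕ} (h η : ℝ) (φ ψ x y : V n) : V n :=
  Fin.cons (-(1/2) * η * (x 0 * tdot φ y + tdot φ x * y 0)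
      -(1/2) * h * (x 0 * tdot ψ y + tdot ψ x * y 0) + (1/2) * ψ 1 * (x 1 * y 1)
      - (1/2) * h * η * (x 1 * tdot φ y + tdot φ x * y 1)
      - (1/4) * (h^2 - 1) * (x 1 * tdot ψ y + tdot ψ x * y 1))
    (Fin.cons (x 0 * tdot ψ y + tdot ψ x * y 0 + (1/2) * η * (x 1 * tdot φ y + tdot φ x * y 1)
        + (1/2) * h * (x 1 * tdot ψ y + tdot ψ x * y 1))
      fun j => -(1/2) * ψ j.succ.succ * (x 0 * y 1 + x 1 * y 0)
        - (1/2) * (η * φ j.succ.succ + h * ψ j.succ.succ) * (x 1 * y 1))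

section
variable {n : ℕ} (h η : ℝ) (φ ψ x y : V n)

lemma Gam_zero : Gam h φ x y 0 =
    -(1/2) * h * (x 0 * tdot φ y + tdot φ x * y 0) + (1/2) * φ 1 * (x 1 * y 1)
      - (1/4) * (h^2 - 1) * (x 1 * tdot φ y + tdot φ x * y 1) := rfl
lemma Gam_one : Gam h φ x y 1 =
    x 0 * tdot φ y + tdot φ x * y 0 + (1/2) * h * (x 1 * tdot φ y + tdot φ x * y 1) := rfl
lemma Gam_succ (j : Fin (n+1)) : Gam h φ x y j.succ.succ =
    -(1/2) * φ j.succ.succ * (x 0 * y 1 + x 1 * y 0)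
        - (1/2) * h * φ j.succ.succ * (x 1 * y 1) := rfl
lemma dGam_zero : dGam h η φ ψ x y 0 =
    -(1/2) * η * (x 0 * tdot φ y + tdot φ x * y 0)
      -(1/2) * h * (x 0 * tdot ψ y + tdot ψ x * y 0) + (1/2) * ψ 1 * (x 1 * y 1)
      - (1/2) * h * η * (x 1 * tdot φ y + tdot φ x * y 1)
      - (1/4) * (h^2 - 1) * (x 1 * tdot ψ y + tdot ψ x * y 1) := rfl
lemma dGam_one : dGam h η φ ψ x y 1 =
    x 0 * tdot ψ y + tdot ψ x * y 0 + (1/2) * η * (x 1 * tdot φ y + tdot φ x * y 1)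
        + (1/2) * h * (x 1 * tdot ψ y + tdot ψ x * y 1) := rfl
lemma dGam_succ (j : Fin (n+1)) : dGam h η φ ψ x y j.succ.succ =
    -(1/2) * ψ j.succ.succ * (x 0 * y 1 + x 1 * y 0)
        - (1/2) * (η * φ j.succ.succ + h * ψ j.succ.succ) * (x 1 * y 1) := rfl

lemma ext3 {x y : V n} (h0 : x 0 = y 0) (h1 : x 1 = y 1)
    (h2 : ∀ j : Fin (n+1), x j.succ.succ = y j.succ.succ) : x = y := by
  funext j
  refine Fin.cases h0 (fun j => ?_) j
  exact Fin.cases h1 h2 j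

lemma sum_transverse (f : Fin (n+3) → ℝ) :
    (∑ i : Fin (n+3), if 2 ≤ (i : ℕ) then f i else 0) = ∑ i : Fin (n+1), f i.succ.succ := by
  simp [Fin.sum_univ_succ]

lemma tdot_add : tdot φ (x + y) = tdot φ x + tdot φ y := by
  simp [tdot, mul_add, Finset.sum_add_distrib]
lemma tdot_sub : tdot φ (x - y) = tdot φ x - tdot φ y := by
  simp [tdot, mul_sub, Finset.sum_sub_distrib]
lemma tdot_ee (k : Fin (n+1)) : tdot φ (ee k.succ.succ) = φ k.succ.succ := by
  simp [tdot, ee, Pi.single_apply]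
lemma tdot_comm : tdot φ x = tdot x φ := by
  simp only [tdot, mul_comm]
lemma tdot_ee_left (k : Fin (n+1)) : tdot (ee k.succ.succ) φ = φ k.succ.succ := by
  rw [tdot_comm, tdot_ee]
lemma tdot_Gam : tdot φ (Gam h φ x y) =
    tdot φ φ * (-(1/2) * (x 0 * y 1 + x 1 * y 0) - (1/2) * h * (x 1 * y 1)) := by
  simp only [tdot, Gam_succ, Finset.sum_mul]
  exact Finset.sum_congr rfl fun i _ => by ring

lemma Gam_add_right (z : V n) : Gam h φ x (y + z) = Gam h φ x y + Gam h φ x z := by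
  refine ext3 ?_ ?_ fun j => ?_ <;>
    simp only [Pi.add_apply, Gam_zero, Gam_one, Gam_succ, tdot_add] <;> ring
lemma Gam_sub_left (z : V n) : Gam h φ (x - y) z = Gam h φ x z - Gam h φ y z := by
  refine ext3 ?_ ?_ fun j => ?_ <;>
    simp only [Pi.sub_apply, Gam_zero, Gam_one, Gam_succ, tdot_sub] <;> ring
end

/-- The coordinate gradient `(H_v, H_u, H_3, …, H_n)` of `H`. -/
def grad {n : ℕ} (H : V n → ℝ) (p : V n) : V n := fun i => Hd H i p

lemma Ga_eq {n : ℕ} (H : V n → ℝ) (p x y : V n) : Ga H p x y = Gam (H p) (grad H p) x y := by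
  refine ext3 ?_ ?_ fun j => ?_
  · simp only [Ga, Gam_zero, sum_transverse]
    simp only [Fin.val_zero, if_true, tdot, Finset.mul_sum, Finset.sum_mul, grad,
      ← Finset.sum_add_distrib, mul_add, add_assoc, sub_eq_add_neg]
    rw [add_comm (1 / 2 * Hd H 1 p * _), add_comm (1 / 2 * Hd H 1 p * _), ← add_assoc, ← add_assoc,
      ← Finset.sum_neg_distrib, ← Finset.sum_add_distrib, ← Finset.sum_add_distrib]
    congr 1
    exact Finset.sum_congr rfl fun i _ => by ring
  · simp only [Ga, Gam_one, sum_transverse]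
    simp only [Fin.val_one, one_ne_zero, if_true, if_false, tdot, Finset.mul_sum, Finset.sum_mul, grad,
      ← Finset.sum_add_distrib]
    exact Finset.sum_congr rfl fun i _ => by ring
  · simp [Ga, Gam_succ, grad]
    ring

lemma HasDerivAt.tdot {n : ℕ} {φ x : ℝ → V n} {φ' x' : V n} {t : ℝ}
    (hφ : HasDerivAt φ φ' t) (hx : HasDerivAt x x' t) :
    HasDerivAt (fun s => tdot (φ s) (x s)) (_root_.tdot φ' (x t) + _root_.tdot (φ t) x') t := by
  rw [hasDerivAt_pi] at hφ hx
  simp only [_root_.tdot, ← Finset.sum_add_distrib]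
  exact HasDerivAt.fun_sum fun i _ => (hφ _).mul (hx _)

/-- Leibniz rule for `Gam` along a curve. -/
lemma HasDerivAt.Gam {n : ℕ} {h : ℝ → ℝ} {φ x y : ℝ → V n} {h' : ℝ} {φ' x' y' : V n} {t : ℝ}
    (hh : HasDerivAt h h' t) (hφ : HasDerivAt φ φ' t) (hx : HasDerivAt x x' t)
    (hy : HasDerivAt y y' t) :
    HasDerivAt (fun s => Gam (h s) (φ s) (x s) (y s))
      (dGam (h t) h' (φ t) φ' (x t) (y t) + _root_.Gam (h t) (φ t) x' (y t)
        + _root_.Gam (h t) (φ t) (x t) y') t := by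
  have hSx := hφ.tdot hx
  have hSy := hφ.tdot hy
  rw [hasDerivAt_pi] at hφ hx hy ⊢
  have hA (i : Fin (n+3)) := ((hx i).mul hSy).add (hSx.mul (hy i))
  intro j
  refine Fin.cases ?_ (fun j => Fin.cases ?_ (fun j => ?_) j) j
  · refine ((((hh.const_mul (-(1/2))).mul (hA 0)).add
      (((hφ 1).const_mul (1/2)).mul ((hx 1).mul (hy 1)))).sub
      ((((hh.pow 2).sub_const 1).const_mul (1/4)).mul (hA 1))).congr_deriv ?_
    simp only [Pi.add_apply, Pi.mul_apply, Pi.pow_apply, Gam_zero, dGam_zero]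
    ring
  · refine ((hA 0).add ((hh.const_mul (1/2)).mul (hA 1))).congr_deriv ?_
    change _ = (_ : V n) 1
    simp only [Pi.add_apply, Pi.mul_apply, Gam_one, dGam_one]
    ring
  · refine ((((hφ j.succ.succ).const_mul (-(1/2))).mul
      (((hx 0).mul (hy 1)).add ((hx 1).mul (hy 0)))).sub
      (((hh.const_mul (1/2)).mul (hφ j.succ.succ)).mul ((hx 1).mul (hy 1)))).congr_deriv ?_
    simp only [Pi.add_apply, Pi.mul_apply, Gam_succ, dGam_succ]
    ring

/-! ### Tensoriality of the curvature -/

section smooth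
variable {n : ℕ} {H : V n → ℝ}

lemma contDiff_grad (hH : ContDiff ℝ (⊤ : ℕ∞) H) : ContDiff ℝ (⊤ : ℕ∞) (grad H) := by
  refine contDiff_pi.2 fun i => ?_
  exact (hH.fderiv_right (m := (⊤ : ℕ∞)) (by simp)).clm_apply contDiff_const

lemma contDiff_Gam {h : V n → ℝ} {φ x y : V n → V n} (hh : ContDiff ℝ (⊤ : ℕ∞) h)
    (hφ : ContDiff ℝ (⊤ : ℕ∞) φ) (hx : ContDiff ℝ (⊤ : ℕ∞) x) (hy : ContDiff ℝ (⊤ : ℕ∞) y) :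
    ContDiff ℝ (⊤ : ℕ∞) (fun q => Gam (h q) (φ q) (x q) (y q)) := by
  rw [contDiff_pi] at hφ hx hy ⊢
  intro j
  refine Fin.cases ?_ (fun j => Fin.cases ?_ (fun j => ?_) j) j
  · simp only [Gam_zero, tdot]; fun_prop
  · change ContDiff ℝ _ (fun q => Gam (h q) (φ q) (x q) (y q) 1)
    simp only [Gam_one, tdot]; fun_prop
  · simp only [Gam_succ]; fun_prop

/-- The curvature tensor in coordinates,
`(D_x Γ)(y, z) − (D_y Γ)(x, z) + Γ(x, Γ(y, z)) − Γ(y, Γ(x, z))`; see `Rcurv_eq`. -/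
def Kt (H : V n → ℝ) (p x y z : V n) : V n :=
  dGam (H p) (fderiv ℝ H p x) (grad H p) (fderiv ℝ (grad H) p x) y z
    - dGam (H p) (fderiv ℝ H p y) (grad H p) (fderiv ℝ (grad H) p y) x z
    + Gam (H p) (grad H p) x (Gam (H p) (grad H p) y z)
    - Gam (H p) (grad H p) y (Gam (H p) (grad H p) x z)

lemma two_le_smooth : (2 : WithTop ℕ∞) ≤ ((⊤ : ℕ∞) : WithTop ℕ∞) :=
  WithTop.coe_le_coe.2 (le_top : (2 : ℕ∞) ≤ ⊤)

lemma hasDerivAt_line {E : Type*} [NormedAddCommGroup E] [NormedSpace ℝ E] {f : V n → E}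
    (hf : ContDiff ℝ (⊤ : ℕ∞) f) (p w : V n) :
    HasDerivAt (fun t : ℝ => f (p + t • w)) (fderiv ℝ f p w) 0 := by
  have h1 : HasDerivAt (fun t : ℝ => p + t • w) w 0 := by
    simpa using ((hasDerivAt_id (0:ℝ)).smul_const w).const_add p
  have h2 : HasFDerivAt f (fderiv ℝ f p) (p + (0:ℝ) • w) := by
    simpa using (hf.differentiable (by simp) p).hasFDerivAt
  exact h2.comp_hasDerivAt 0 h1

lemma fderiv_cd (hH : ContDiff ℝ (⊤ : ℕ∞) H) {b c : V n → V n} (hb : ContDiff ℝ (⊤ : ℕ∞) b)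
    (hc : ContDiff ℝ (⊤ : ℕ∞) c) (p w : V n) :
    fderiv ℝ (cd H b c) p w =
      fderiv ℝ (fderiv ℝ c) p w (b p) + fderiv ℝ c p (fderiv ℝ b p w)
      + (dGam (H p) (fderiv ℝ H p w) (grad H p) (fderiv ℝ (grad H) p w) (b p) (c p)
        + Gam (H p) (grad H p) (fderiv ℝ b p w) (c p)
        + Gam (H p) (grad H p) (b p) (fderiv ℝ c p w)) := by
  have hc' : ContDiff ℝ (⊤ : ℕ∞) (fderiv ℝ c) := hc.fderiv_right (by simp)
  have hcd : cd H b c = fun q => fderiv ℝ c q (b q) + Gam (H q) (grad H q) (b q) (c q) := by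
    funext q; rw [cd, Ga_eq]
  have hs : ContDiff ℝ (⊤ : ℕ∞) (cd H b c) := by
    rw [hcd]
    exact (hc'.clm_apply hb).add (contDiff_Gam hH (contDiff_grad hH) hb hc)
  refine (hasDerivAt_line hs p w).unique ?_
  rw [hcd]
  have := ((hasDerivAt_line hc' p w).clm_apply (hasDerivAt_line hb p w)).add
    ((hasDerivAt_line hH p w).Gam (hasDerivAt_line (contDiff_grad hH) p w)
      (hasDerivAt_line hb p w) (hasDerivAt_line hc p w))
  simpa [Pi.add_def] using this

/-- The curvature at `p` depends only on the values of the fields at `p`: the derivatives of `a`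
and `b` are absorbed by the bracket term, and those of `c` cancel because the second derivative
is symmetric. -/
lemma Rcurv_eq (hH : ContDiff ℝ (⊤ : ℕ∞) H) {a b c : V n → V n} (ha : ContDiff ℝ (⊤ : ℕ∞) a)
    (hb : ContDiff ℝ (⊤ : ℕ∞) b) (hc : ContDiff ℝ (⊤ : ℕ∞) c) (p : V n) :
    Rcurv H a b c p = Kt H p (a p) (b p) (c p) := by
  have hsymm : fderiv ℝ (fderiv ℝ c) p (a p) (b p) = fderiv ℝ (fderiv ℝ c) p (b p) (a p) :=
    (hc.contDiffAt.isSymmSndFDerivAt (by simpa using two_le_smooth)) _ _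
  rw [Rcurv, cd, cd, cd, fderiv_cd hH hb hc, fderiv_cd hH ha hc, hsymm]
  simp only [cd, br, Ga_eq, Gam_add_right, Gam_sub_left, map_sub, Kt]
  abel

/-! ### Second derivatives of `H` -/

lemma fderiv_ee_zero (hv : VIndep H) (hH : ContDiff ℝ (⊤ : ℕ∞) H) (p : V n) :
    fderiv ℝ H p (ee 0) = 0 := by
  have h1 := hasDerivAt_line hH p (ee 0)
  have h2 : (fun t : ℝ => H (p + t • ee 0)) = fun _ => H p := by
    funext t
    rw [← hv p (p 0 + t)]
    congr 1
    funext j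
    by_cases hj : j = 0 <;> simp [hj, ee]
  rw [h2] at h1
  exact h1.unique (hasDerivAt_const _ _)

lemma fderiv_grad_apply (hH : ContDiff ℝ (⊤ : ℕ∞) H) (p w : V n) (j : Fin (n+3)) :
    fderiv ℝ (grad H) p w j = fderiv ℝ (fderiv ℝ H) p w (ee j) := by
  have h1 := hasDerivAt_pi.1 (hasDerivAt_line (contDiff_grad hH) p w) j
  have h2 := (hasDerivAt_line (hH.fderiv_right (m := (⊤ : ℕ∞)) (by simp)) p w).clm_apply
    (hasDerivAt_const (0:ℝ) (ee j : V n))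
  simpa using h1.unique h2

lemma fderiv_grad_symm (hH : ContDiff ℝ (⊤ : ℕ∞) H) (p : V n) (i j : Fin (n+3)) :
    fderiv ℝ (grad H) p (ee i) j = fderiv ℝ (grad H) p (ee j) i := by
  rw [fderiv_grad_apply hH, fderiv_grad_apply hH]
  exact (hH.contDiffAt.isSymmSndFDerivAt (by simpa using two_le_smooth)) _ _

lemma fderiv_grad_of_zero (hH : ContDiff ℝ (⊤ : ℕ∞) H) {j : Fin (n+3)}
    (hj : ∀ q, Hd H j q = 0) (p w : V n) : fderiv ℝ (grad H) p w j = 0 := by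
  have h1 := hasDerivAt_pi.1 (hasDerivAt_line (contDiff_grad hH) p w) j
  simp only [grad, hj] at h1
  exact h1.unique (hasDerivAt_const _ _)

lemma fderiv_grad_ee_zero (hv : VIndep H) (hH : ContDiff ℝ (⊤ : ℕ∞) H) (p : V n) :
    fderiv ℝ (grad H) p (ee 0) = 0 := by
  funext j
  rw [fderiv_grad_symm hH]
  exact fderiv_grad_of_zero hH (fun q => fderiv_ee_zero hv hH q) p _

/-! ### The orthonormal frame and the scalar curvature -/

/-- The family `((H + c)/2) e₁ − e₂`, which is `T` for `c = 1` and `Z` for `c = -1`. -/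
def FF (H : V n → ℝ) (c : ℝ) (p : V n) : V n := ((H p + c) / 2) • ee 0 - ee 1

lemma TT_eq : TT H = FF H 1 := rfl
lemma ZZ_eq : ZZ H = FF H (-1) := by
  funext p; simp [ZZ, FF, sub_eq_add_neg]

lemma FF_zero (c : ℝ) (p : V n) : FF H c p 0 = (H p + c) / 2 := by
  simp [FF, ee]
lemma FF_one (c : ℝ) (p : V n) : FF H c p 1 = -1 := by
  simp [FF, ee]
lemma FF_succ (c : ℝ) (p : V n) (j : Fin (n+1)) : FF H c p j.succ.succ = 0 := by
  simp [FF, ee, Fin.succ_ne_zero, Fin.succ_succ_ne_one]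
lemma ee_succ_zero (k : Fin (n+1)) : (ee k.succ.succ : V n) 0 = 0 := by
  simp [ee, (Fin.succ_ne_zero _).symm]
lemma ee_succ_one (k : Fin (n+1)) : (ee k.succ.succ : V n) 1 = 0 := by
  simp [ee, (Fin.succ_succ_ne_one _).symm]

lemma tdot_FF (c : ℝ) (p φ : V n) : tdot φ (FF H c p) = 0 := by
  simp [tdot, FF_succ]

lemma contDiff_FF (hH : ContDiff ℝ (⊤ : ℕ∞) H) (c : ℝ) : ContDiff ℝ (⊤ : ℕ∞) (FF H c) := by
  unfold FF; fun_prop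

lemma fderiv_FF (hH : ContDiff ℝ (⊤ : ℕ∞) H) (hv : VIndep H) (c : ℝ) (p : V n) :
    fderiv ℝ H p (FF H c p) = - grad H p 1 := by
  simp [FF, fderiv_ee_zero hv hH, grad, Hd]
lemma fderiv_grad_FF (hH : ContDiff ℝ (⊤ : ℕ∞) H) (hv : VIndep H) (c : ℝ) (p : V n) :
    fderiv ℝ (grad H) p (FF H c p) = - fderiv ℝ (grad H) p (ee 1) := by
  simp [FF, fderiv_grad_ee_zero hv hH]

lemma gg_eq (p x y : V n) : gg H p x y = 2 * x 0 * y 0 + H p * (x 0 * y 1 + x 1 * y 0)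
    + (1 + H p ^ 2) / 2 * (x 1 * y 1) + tdot x y := by
  rw [gg, sum_transverse]; rfl

lemma gg_Kt_FF_ee (c : ℝ) (p : V n) (k : Fin (n+1)) :
    gg H p (Kt H p (FF H c p) (ee k.succ.succ) (ee k.succ.succ)) (FF H c p) =
      c / 2 * fderiv ℝ (grad H) p (ee k.succ.succ) k.succ.succ
        + (c^2 - 3) / 8 * grad H p k.succ.succ ^ 2 := by
  have hk : fderiv ℝ H p (ee k.succ.succ) = grad H p k.succ.succ := rfl
  simp only [gg_eq, tdot_FF, Kt, Pi.add_apply, Pi.sub_apply, Gam_zero, Gam_one, dGam_zero,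
    dGam_one, FF_zero, FF_one, ee_succ_zero, ee_succ_one, tdot_ee, tdot_Gam, hk]
  ring

lemma gg_Kt_ee_FF (c : ℝ) (p : V n) (k : Fin (n+1)) :
    gg H p (Kt H p (ee k.succ.succ) (FF H c p) (FF H c p)) (ee k.succ.succ) =
      c / 2 * fderiv ℝ (grad H) p (ee k.succ.succ) k.succ.succ
        + (c^2 - 3) / 8 * grad H p k.succ.succ ^ 2 := by
  have hk : fderiv ℝ H p (ee k.succ.succ) = grad H p k.succ.succ := rfl
  simp only [gg_eq, Kt, Pi.add_apply, Pi.sub_apply, Gam_zero, Gam_one, Gam_succ, dGam_succ,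
    tdot_FF, FF_zero, FF_one, ee_succ_zero, ee_succ_one, tdot_ee, tdot_Gam, hk]
  ring

lemma gg_Kt_FF_FF (hH : ContDiff ℝ (⊤ : ℕ∞) H) (hv : VIndep H) (c d : ℝ) (p : V n) :
    gg H p (Kt H p (FF H c p) (FF H d p) (FF H d p)) (FF H c p) =
      (c - d)^2 / 16 * tdot (grad H p) (grad H p) := by
  simp only [gg_eq, tdot_FF, Kt, Pi.add_apply, Pi.sub_apply, Gam_zero, Gam_one, dGam_zero,
    dGam_one, FF_zero, FF_one, tdot_Gam, fderiv_FF hH hv, fderiv_grad_FF hH hv, Pi.neg_apply]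
  ring

lemma gg_Kt_ee_ee (p : V n) (k l : Fin (n+1)) :
    gg H p (Kt H p (ee k.succ.succ) (ee l.succ.succ) (ee l.succ.succ)) (ee k.succ.succ) = 0 := by
  simp only [gg_eq, tdot_comm _ (ee _), tdot_ee_left, Kt, Pi.add_apply, Pi.sub_apply, Gam_succ,
    dGam_succ, Gam_one, Gam_zero, ee_succ_zero, ee_succ_one]
  ring

lemma scal_eq (hH : ContDiff ℝ (⊤ : ℕ∞) H) (hv : VIndep H) (p : V n) :
    scal H p = -(1/2) * ∑ i : Fin (n+1), Hd H i.succ.succ p ^ 2 := by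
  have hX (k : Fin (n+3)) : ContDiff ℝ (⊤ : ℕ∞) (XX k : V n → V n) := contDiff_const
  have hF := contDiff_FF hH
  have hg : tdot (grad H p) (grad H p) = ∑ i : Fin (n+1), Hd H i.succ.succ p ^ 2 :=
    Finset.sum_congr rfl fun i _ => (sq _).symm
  have hRF (c : ℝ) : Ric H (FF H c) (FF H c) p =
      (1 - c)^2 / 16 * tdot (grad H p) (grad H p)
      + (∑ k : Fin (n+1), (c / 2 * fderiv ℝ (grad H) p (ee k.succ.succ) k.succ.succ
        + (c^2 - 3) / 8 * grad H p k.succ.succ ^ 2))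
      + (-1 - c)^2 / 16 * tdot (grad H p) (grad H p) := by
    rw [Ric, TT_eq, ZZ_eq, Rcurv_eq hH (hF _) (hF _) (hF _), Rcurv_eq hH (hF _) (hF _) (hF _),
      gg_Kt_FF_FF hH hv, gg_Kt_FF_FF hH hv, sum_transverse]
    congr 2
    refine Finset.sum_congr rfl fun k _ => ?_
    rw [Rcurv_eq hH (hX _) (hF _) (hF _)]
    exact gg_Kt_ee_FF c p k
  have hRX (l : Fin (n+1)) : Ric H (XX l.succ.succ) (XX l.succ.succ) p =
      -(1/2) * Hd H l.succ.succ p ^ 2 := by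
    rw [Ric, TT_eq, ZZ_eq, Rcurv_eq hH (hF _) (hX _) (hX _), Rcurv_eq hH (hF _) (hX _) (hX _),
      sum_transverse]
    have h0 : ∑ k : Fin (n+1), gg H p (Rcurv H (XX k.succ.succ) (XX l.succ.succ)
        (XX l.succ.succ) p) (ee k.succ.succ) = 0 :=
      Finset.sum_eq_zero fun k _ => by
        rw [Rcurv_eq hH (hX _) (hX _) (hX _)]
        exact gg_Kt_ee_ee p k l
    rw [h0]
    simp only [XX, gg_Kt_FF_ee, grad]
    ring
  rw [scal, sum_transverse, TT_eq, ZZ_eq, hRF, hRF]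
  simp only [hRX, ← Finset.mul_sum, Finset.sum_add_distrib, hg, grad]
  ring

/-- If the transverse derivatives of `H` vanish, then `Γ` reduces to `Γ^v_{uu} = H_u / 2`, and
since the derivative of `H_u` in a direction `w` is `w_u H_{uu}`, the curvature vanishes. -/
lemma Kt_eq_zero (hH : ContDiff ℝ (⊤ : ℕ∞) H) (hv : VIndep H)
    (h0 : ∀ (i : Fin (n+1)) (p : V n), Hd H i.succ.succ p = 0) (p x y z : V n) :
    Kt H p x y z = 0 := by
  have hg (i : Fin (n+1)) : grad H p i.succ.succ = 0 := h0 i p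
  have hd (w : V n) (i : Fin (n+1)) : fderiv ℝ (grad H) p w i.succ.succ = 0 :=
    fderiv_grad_of_zero hH (h0 i) p w
  have ht (w : V n) : tdot (grad H p) w = 0 := by simp [tdot, hg]
  have htd (w w' : V n) : tdot (fderiv ℝ (grad H) p w) w' = 0 := by simp [tdot, hd]
  have hu (w : V n) : fderiv ℝ (grad H) p w 1 = w 1 * fderiv ℝ (grad H) p (ee 1) 1 := by
    have hw : w = ∑ j, w j • (ee j : V n) := by
      funext k; simp [ee, Pi.single_apply]
    conv_lhs => rw [hw]
    simp only [map_sum, map_smul, Finset.sum_apply, Pi.smul_apply, smul_eq_mul]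
    rw [Fin.sum_univ_succ, Fin.sum_univ_succ]
    have h2 (i : Fin (n+1)) : fderiv ℝ (grad H) p (ee i.succ.succ) 1 = 0 := by
      rw [fderiv_grad_symm hH, hd]
    simp [h2, fderiv_grad_ee_zero hv hH]
  refine ext3 ?_ ?_ fun j => ?_ <;>
    simp only [Kt, Pi.add_apply, Pi.sub_apply, Pi.zero_apply, Gam_zero, Gam_one, Gam_succ,
      dGam_zero, dGam_one, dGam_succ, ht, htd, hg, hd, hu x, hu y] <;> ring

end smooth

/-- The scalar curvature satisfies `scal = −(1/2)ΣᵢHᵢ² ≤ 0`; it vanishes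
identically iff all the `Hᵢ` vanish identically, which happens iff the curvature vanishes
identically (for all smooth vector fields), i.e. iff `g` is flat. -/
theorem stmt_16 (n : ℕ) (H : V n → ℝ) (hH : ContDiff ℝ (⊤ : ℕ∞) H) (hHv : VIndep H) :
    (∀ p : V n,
      scal H p = -(1/2) * ∑ i : Fin (n+3), (if 2 ≤ (i : ℕ) then (Hd H i p)^2 else 0) ∧
      scal H p ≤ 0) ∧
    ((∀ p : V n, scal H p = 0)
      ↔ (∀ i : Fin (n+3), 2 ≤ (i : ℕ) → ∀ p : V n, Hd H i p = 0)) ∧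
    ((∀ p : V n, scal H p = 0)
      ↔ (∀ a b c : V n → V n,
          ContDiff ℝ (⊤ : ℕ∞) a → ContDiff ℝ (⊤ : ℕ∞) b → ContDiff ℝ (⊤ : ℕ∞) c →
          ∀ p : V n, Rcurv H a b c p = 0)) := by
  have key (p : V n) : scal H p
      = -(1/2) * ∑ i : Fin (n+3), (if 2 ≤ (i : ℕ) then (Hd H i p)^2 else 0) := by
    rw [scal_eq hH hHv, sum_transverse]
  have hnn (p : V n) (i : Fin (n+3)) : 0 ≤ if 2 ≤ (i : ℕ) then (Hd H i p)^2 else 0 := by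
    split_ifs <;> positivity
  have hiff : (∀ p : V n, scal H p = 0)
      ↔ (∀ i : Fin (n+3), 2 ≤ (i : ℕ) → ∀ p : V n, Hd H i p = 0) := by
    constructor
    · intro h i hi p
      have hs : ∑ i : Fin (n+3), (if 2 ≤ (i : ℕ) then (Hd H i p)^2 else 0) = 0 := by
        linarith [key p, h p]
      have := (Finset.sum_eq_zero_iff_of_nonneg fun i _ => hnn p i).1 hs i (Finset.mem_univ i)
      simpa [hi] using this
    · intro h p
      rw [key p, Finset.sum_eq_zero, mul_zero]
      intro i _
      split_ifs with hi
      · simp [h i hi p]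
      · rfl
  refine ⟨fun p => ⟨key p, ?_⟩, hiff, fun h a b c ha hb hc p => ?_, fun h p => ?_⟩
  · rw [key p]
    linarith [Finset.sum_nonneg fun i (_ : i ∈ Finset.univ) => hnn p i]
  · rw [Rcurv_eq hH ha hb hc]
    exact Kt_eq_zero hH hHv (fun i q => hiff.1 h i.succ.succ (by simp) q) p _ _ _
  · have hX (k : Fin (n+3)) : ContDiff ℝ (⊤ : ℕ∞) (XX k : V n → V n) := contDiff_const
    have hT : ContDiff ℝ (⊤ : ℕ∞) (TT H) := TT_eq ▸ contDiff_FF hH 1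
    have hZ : ContDiff ℝ (⊤ : ℕ∞) (ZZ H) := ZZ_eq ▸ contDiff_FF hH (-1)
    have hR {a : V n → V n} (ha : ContDiff ℝ (⊤ : ℕ∞) a) : Ric H a a p = 0 := by
      simp [Ric, h _ _ _ hT ha ha p, h _ _ _ hZ ha ha p, h _ _ _ (hX _) ha ha p, gg]
    simp [scal, hR hT, hR hZ, hR (hX _)]
end
end

section
/- Suppose H(v, u, x³, …, xⁿ) = φ(u) + Σ_{i=3}^n aᵢ xⁱ for a smooth function φ : ℝ → ℝ and real constants a₃, …, aₙ not all zero. Then the scalar curvature scal(p) := Ric(T,T)(p) + Σ_{i=3}^n Ric(X_i,X_i)(p) + Ric(Z,Z)(p) is the constant −(1/2)Σ_{i=3}^n aᵢ², which is strictly negative; that is, the standard Riemannian dual metric has constant negative scalar curvature. -/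
/-!
The connection is `∇ = D + Γ`, and for such a connection the curvature is tensorial:
`R(a,b)c = DΓ(a)(b,c) - DΓ(b)(a,c) + Γ(a,Γ(b,c)) - Γ(b,Γ(a,c))` (`curv_formula`). For
`H = φ(u) + α(x)` with `α(x) = Σ aᵢ xⁱ`, the Christoffel map depends on the point only through the
scalars `H`, `φ'(u)` and `H² - 1`, which multiply constant bilinear maps built from `α`, the
coordinates and the vector `(0, 0, a₃, …, aₙ)` (`GB`, `Ga_eq`). This gives the curvature in closed
form (`Rcurv_eq`).

Evaluating on the orthonormal frame `T, X_i, Z` (`frame_curv`), with `S = Σ aᵢ²`, the sectional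
curvature is `S/4` on the plane `T, Z`, it is `-aᵢ²/4` on the planes `T, X_i` and `Z, X_i`, and it
vanishes on `X_i, X_j`. Summing over ordered pairs, `scal = 2 · S/4 - 4 · S/4 = -S/2`.
-/

noncomputable section

/-! ### Curvature of a connection `D + Γ` -/

section Curvature

/-- Leibniz rule for `q ↦ (∇_b c)(q)`, where `∇ = D + Γ` with `Γ` bundled as a continuous
bilinear map at each point. -/
lemma fderiv_conn {E : Type*} [NormedAddCommGroup E] [NormedSpace ℝ E]
    {Γ : E → E →L[ℝ] E →L[ℝ] E} {Γ' : E →L[ℝ] E →L[ℝ] E →L[ℝ] E} {p : E}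
    (hΓ : HasFDerivAt Γ Γ' p) {b c : E → E} (hb : ContDiff ℝ 2 b) (hc : ContDiff ℝ 2 c) (w : E) :
    fderiv ℝ (fun q => fderiv ℝ c q (b q) + Γ q (b q) (c q)) p w =
      fderiv ℝ (fderiv ℝ c) p w (b p) + fderiv ℝ c p (fderiv ℝ b p w)
        + (Γ' w (b p) (c p) + Γ p (fderiv ℝ b p w) (c p) + Γ p (b p) (fderiv ℝ c p w)) := by
  have hb1 : HasFDerivAt b (fderiv ℝ b p) p := (hb.differentiable (by norm_num) p).hasFDerivAt
  have hc1 : HasFDerivAt c (fderiv ℝ c p) p := (hc.differentiable (by norm_num) p).hasFDerivAt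
  have hc2 : HasFDerivAt (fderiv ℝ c) (fderiv ℝ (fderiv ℝ c) p) p :=
    ((hc.fderiv_right (m := 1) (by norm_num)).differentiable (by norm_num) p).hasFDerivAt
  have key := (hc2.clm_apply hb1).add ((hΓ.clm_apply hb1).clm_apply hc1)
  have h2 := DFunLike.congr_fun key.fderiv w
  refine Eq.trans h2 ?_
  simp
  abel

/-- Tensoriality of the curvature of `∇ = D + Γ`: the second derivatives of `c` cancel by
symmetry and the first derivatives of `a`, `b` cancel against the Lie bracket term. -/
lemma curv_formula {E : Type*} [NormedAddCommGroup E] [NormedSpace ℝ E]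
    {Γ : E → E →L[ℝ] E →L[ℝ] E} {Γ' : E →L[ℝ] E →L[ℝ] E →L[ℝ] E} {p : E}
    (hΓ : HasFDerivAt Γ Γ' p) {a b c : E → E}
    (ha : ContDiff ℝ 2 a) (hb : ContDiff ℝ 2 b) (hc : ContDiff ℝ 2 c) :
    (fderiv ℝ (fun q => fderiv ℝ c q (b q) + Γ q (b q) (c q)) p (a p)
        + Γ p (a p) (fderiv ℝ c p (b p) + Γ p (b p) (c p)))
      - (fderiv ℝ (fun q => fderiv ℝ c q (a q) + Γ q (a q) (c q)) p (b p)
        + Γ p (b p) (fderiv ℝ c p (a p) + Γ p (a p) (c p)))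
      - (fderiv ℝ c p (fderiv ℝ b p (a p) - fderiv ℝ a p (b p))
        + Γ p (fderiv ℝ b p (a p) - fderiv ℝ a p (b p)) (c p))
      = Γ' (a p) (b p) (c p) - Γ' (b p) (a p) (c p)
        + Γ p (a p) (Γ p (b p) (c p)) - Γ p (b p) (Γ p (a p) (c p)) := by
  have hs : fderiv ℝ (fderiv ℝ c) p (a p) (b p) = fderiv ℝ (fderiv ℝ c) p (b p) (a p) :=
    (hc.contDiffAt.isSymmSndFDerivAt (by simp)) (a p) (b p)
  rw [fderiv_conn hΓ hb hc, fderiv_conn hΓ ha hc, hs]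
  simp only [map_sub, map_add, sub_apply]
  abel

lemma hasFDerivAt_comb {E F : Type*} [NormedAddCommGroup E] [NormedSpace ℝ E]
    [NormedAddCommGroup F] [NormedSpace ℝ F] {h f k : E → ℝ} {h' f' k' : E →L[ℝ] ℝ} {p : E}
    (hh : HasFDerivAt h h' p) (hf : HasFDerivAt f f' p) (hk : HasFDerivAt k k' p)
    (B₀ B₁ B₂ B₃ : F) :
    ∃ L : E →L[ℝ] F,
      HasFDerivAt (fun q => (1 : ℝ) • B₀ + h q • B₁ + f q • B₂ - k q • B₃) L p ∧
      ∀ w, L w = (0 : ℝ) • B₀ + h' w • B₁ + f' w • B₂ - k' w • B₃ := by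
  refine ⟨_, (((hasFDerivAt_const _ p).fun_add (hh.smul_const _)).fun_add
    (hf.smul_const _)).fun_sub (hk.smul_const _), fun w => ?_⟩
  simp

end Curvature

/-! ### The Christoffel map as a combination of constant bilinear maps -/

section Coordinates

variable {n : ℕ}

/-- The coefficients `A i` with the two entries at the positions of `v` and `u` set to zero. -/
def AV (A : Fin (n+3) → ℝ) : V n := fun i => if 2 ≤ (i : ℕ) then A i else 0

/-- The linear form `p ↦ Σ_{i ≥ 2} A i * p i`. -/
def al (A : Fin (n+3) → ℝ) : V n →L[ℝ] ℝ :=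
  ∑ i, AV A i • ContinuousLinearMap.proj (R := ℝ) (φ := fun _ : Fin (n+3) => ℝ) i

/-- The `i`-th coordinate as a continuous linear form. -/
def pr (i : Fin (n+3)) : V n →L[ℝ] ℝ :=
  ContinuousLinearMap.proj (R := ℝ) (φ := fun _ : Fin (n+3) => ℝ) i

/-- The bilinear map `(a, b) ↦ (l a * m b + m a * l b) • w`. -/
def symB (l m : V n →L[ℝ] ℝ) (w : V n) : V n →L[ℝ] V n →L[ℝ] V n :=
  l.smulRight (m.smulRight w) + m.smulRight (l.smulRight w)

/-- The bilinear map with the coefficients of `Γ`, the scalars `1`, `H`, `H_u`, `H² - 1` being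
replaced by independent parameters `c`, `h`, `f`, `k`. It is linear in `(c, h, f, k)`, so it
describes both `Γ` and its derivative. -/
def GB (A : Fin (n+3) → ℝ) (c h f k : ℝ) : V n →L[ℝ] V n →L[ℝ] V n :=
  c • (symB (pr 0) (al A) (ee 1) - (1/2 : ℝ) • symB (pr 0) (pr 1) (AV A))
    + h • ((1/2 : ℝ) • symB (pr 1) (al A) (ee 1) - (1/2 : ℝ) • symB (pr 0) (al A) (ee 0)
        - (1/4 : ℝ) • symB (pr 1) (pr 1) (AV A))
    + f • ((1/4 : ℝ) • symB (pr 1) (pr 1) (ee 0))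
    - k • ((1/4 : ℝ) • symB (pr 1) (al A) (ee 0))

lemma pr_apply (i : Fin (n+3)) (x : V n) : pr i x = x i := rfl

lemma al_apply (A : Fin (n+3) → ℝ) (x : V n) : al A x = ∑ i, AV A i * x i := by
  simp [al]

lemma al_ee (A : Fin (n+3) → ℝ) (i : Fin (n+3)) : al A (ee i) = AV A i := by
  simp [al_apply, ee, Pi.single_apply]

lemma AV_zero (A : Fin (n+3) → ℝ) : AV A 0 = 0 := by simp [AV]

lemma AV_one (A : Fin (n+3) → ℝ) : AV A 1 = 0 := by simp [AV]

lemma ee_self (i : Fin (n+3)) : (ee i : V n) i = 1 := by simp [ee]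

lemma ee_ne {i j : Fin (n+3)} (h : j ≠ i) : (ee i : V n) j = 0 := by simp [ee, h]

lemma one_ne_zero_fin : (1 : Fin (n+3)) ≠ 0 := by simp

lemma ne_zero_of_two_le {i : Fin (n+3)} (h : 2 ≤ (i : ℕ)) : i ≠ 0 := by
  rintro rfl; simp at h

lemma ne_one_of_two_le {i : Fin (n+3)} (h : 2 ≤ (i : ℕ)) : i ≠ 1 := by
  rintro rfl; simp at h

lemma GB_apply (A : Fin (n+3) → ℝ) (c h f k : ℝ) (x y : V n) (j : Fin (n+3)) :
    GB A c h f k x y j =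
      (c * (x 0 * al A y + al A x * y 0) + h / 2 * (x 1 * al A y + al A x * y 1)) * ee 1 j
      + (-(h / 2) * (x 0 * al A y + al A x * y 0) + f / 2 * (x 1 * y 1)
          - k / 4 * (x 1 * al A y + al A x * y 1)) * ee 0 j
      + (-(c / 2) * (x 0 * y 1 + x 1 * y 0) - h / 2 * (x 1 * y 1)) * AV A j := by
  simp [GB, symB, pr_apply]
  ring

lemma al_GB (A : Fin (n+3) → ℝ) (c h f k : ℝ) (x y : V n) :
    al A (GB A c h f k x y) =
      (-(c / 2) * (x 0 * y 1 + x 1 * y 0) - h / 2 * (x 1 * y 1)) * al A (AV A) := by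
  have : GB A c h f k x y =
      (c * (x 0 * al A y + al A x * y 0) + h / 2 * (x 1 * al A y + al A x * y 1)) • ee 1
      + (-(h / 2) * (x 0 * al A y + al A x * y 0) + f / 2 * (x 1 * y 1)
          - k / 4 * (x 1 * al A y + al A x * y 1)) • ee 0
      + (-(c / 2) * (x 0 * y 1 + x 1 * y 0) - h / 2 * (x 1 * y 1)) • AV A := by
    ext j
    rw [GB_apply]
    simp
  rw [this]
  simp only [map_add, map_smul, al_ee, AV_zero, AV_one, smul_eq_mul]
  ring

end Coordinates

/-! ### The case `H = φ(u) + Σ aᵢ xⁱ` -/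

section Main

variable {n : ℕ} {φ : ℝ → ℝ} {A : Fin (n+3) → ℝ} {H : V n → ℝ}

lemma H_eq (hHdef : ∀ p : V n,
      H p = φ (p 1) + ∑ i : Fin (n+3), (if 2 ≤ (i : ℕ) then A i * p i else 0)) :
    H = fun p => φ (pr 1 p) + al A p := by
  funext p
  rw [hHdef, al_apply, pr_apply]
  simp [AV, ite_mul]

lemma hasFDerivAt_H (hφ : ContDiff ℝ (⊤ : ℕ∞) φ) (hH : H = fun p => φ (pr 1 p) + al A p)
    (p : V n) : HasFDerivAt H (deriv φ (p 1) • pr 1 + al A) p := by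
  subst hH
  have h1 : HasDerivAt φ (deriv φ (p 1)) (pr 1 p) :=
    (hφ.differentiable (by simp) _).hasDerivAt
  exact (h1.comp_hasFDerivAt p (pr 1).hasFDerivAt).add (al A).hasFDerivAt

lemma hasFDerivAt_dφ (hφ : ContDiff ℝ (⊤ : ℕ∞) φ) (p : V n) :
    HasFDerivAt (fun q : V n => deriv φ (q 1)) (deriv (deriv φ) (p 1) • pr 1) p := by
  have h0 : ContDiff ℝ 1 (deriv φ) :=
    ((contDiff_infty_iff_deriv.1 hφ).2).of_le (by exact_mod_cast le_top)
  have h1 : HasDerivAt (deriv φ) (deriv (deriv φ) (p 1)) (pr 1 p) :=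
    (h0.differentiable (by simp) _).hasDerivAt
  exact h1.comp_hasFDerivAt p (pr 1).hasFDerivAt

lemma Hd_one (hφ : ContDiff ℝ (⊤ : ℕ∞) φ) (hH : H = fun p => φ (pr 1 p) + al A p) (p : V n) :
    Hd H 1 p = deriv φ (p 1) := by
  rw [Hd, (hasFDerivAt_H hφ hH p).fderiv]
  simp [pr_apply, al_ee, AV_one, ee_self]

lemma Hd_of_two_le (hφ : ContDiff ℝ (⊤ : ℕ∞) φ) (hH : H = fun p => φ (pr 1 p) + al A p)
    (p : V n) {i : Fin (n+3)} (hi : 2 ≤ (i : ℕ)) : Hd H i p = AV A i := by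
  rw [Hd, (hasFDerivAt_H hφ hH p).fderiv]
  simp [pr_apply, al_ee, ee_ne (ne_one_of_two_le hi).symm]

/-- The sums over `i ≥ 2` occurring in `Ga`, in terms of the linear form `al`. -/
lemma sum_Hd (hφ : ContDiff ℝ (⊤ : ℕ∞) φ) (hH : H = fun p => φ (pr 1 p) + al A p)
    (p : V n) (s t u : ℝ) (x y : V n) :
    (∑ i : Fin (n+3), if 2 ≤ (i : ℕ) then s * Hd H i p * (t * y i + x i * u) else 0)
      = s * (t * al A y + al A x * u) := by
  rw [al_apply, al_apply, Finset.mul_sum, Finset.sum_mul, ← Finset.sum_add_distrib,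
    Finset.mul_sum]
  refine Finset.sum_congr rfl fun i _ => ?_
  split_ifs with hi
  · rw [Hd_of_two_le hφ hH p hi]; ring
  · simp [AV, hi]

lemma Ga_eq_s17 (hφ : ContDiff ℝ (⊤ : ℕ∞) φ) (hH : H = fun p => φ (pr 1 p) + al A p)
    (p x y : V n) :
    Ga H p x y = GB A 1 (H p) (deriv φ (p 1)) (H p ^ 2 - 1) x y := by
  funext j
  have h3 := sum_Hd hφ hH p 1 (x 0) (y 0) x y
  simp only [one_mul] at h3
  rw [GB_apply]
  simp only [Ga, sum_Hd hφ hH, h3, Hd_one hφ hH]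
  split_ifs with h0 h1
  · obtain rfl : j = 0 := Fin.ext h0
    rw [ee_self, ee_ne one_ne_zero_fin.symm, AV_zero]; ring
  · obtain rfl : j = 1 := Fin.ext (by simpa using h1)
    rw [ee_self, ee_ne one_ne_zero_fin, AV_one]; ring
  · have hj : 2 ≤ (j : ℕ) := by omega
    rw [Hd_of_two_le hφ hH p hj, ee_ne (ne_one_of_two_le hj), ee_ne (ne_zero_of_two_le hj)]; ring

/-- The derivative of `p ↦ Γ_p`, obtained by differentiating the coefficients of `GB`. -/
lemma hasFDerivAt_Γ (hφ : ContDiff ℝ (⊤ : ℕ∞) φ) (hH : H = fun p => φ (pr 1 p) + al A p)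
    (p : V n) :
    ∃ Γ' : V n →L[ℝ] V n →L[ℝ] V n →L[ℝ] V n,
      HasFDerivAt (fun q => GB A 1 (H q) (deriv φ (q 1)) (H q ^ 2 - 1)) Γ' p ∧
      ∀ w, Γ' w = GB A 0 (deriv φ (p 1) * w 1 + al A w) (deriv (deriv φ) (p 1) * w 1)
        (2 * H p * (deriv φ (p 1) * w 1 + al A w)) := by
  have h1 := hasFDerivAt_H hφ hH p
  have h2 := hasFDerivAt_dφ hφ p
  have h3 := (h1.pow 2).sub_const 1
  obtain ⟨Γ', hΓ, hw⟩ := hasFDerivAt_comb h1 h2 h3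
    (symB (pr 0) (al A) (ee 1) - (1/2 : ℝ) • symB (pr 0) (pr 1) (AV A))
    ((1/2 : ℝ) • symB (pr 1) (al A) (ee 1) - (1/2 : ℝ) • symB (pr 0) (al A) (ee 0)
        - (1/4 : ℝ) • symB (pr 1) (pr 1) (AV A))
    ((1/4 : ℝ) • symB (pr 1) (pr 1) (ee 0)) ((1/4 : ℝ) • symB (pr 1) (al A) (ee 0))
  refine ⟨Γ', hΓ, fun w => ?_⟩
  rw [hw, GB]
  have e1 : (deriv φ (p 1) • pr 1 + al A : V n →L[ℝ] ℝ) w = deriv φ (p 1) * w 1 + al A w := rfl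
  have e2 : (deriv (deriv φ) (p 1) • pr 1 : V n →L[ℝ] ℝ) w = deriv (deriv φ) (p 1) * w 1 := rfl
  have e3 : ((2 • H p ^ (2 - 1)) • (deriv φ (p 1) • pr 1 + al A) : V n →L[ℝ] ℝ) w
      = 2 * H p * (deriv φ (p 1) * w 1 + al A w) := by
    simp [pr_apply]
    ring
  rw [e1, e2, e3]

/-- The curvature at `p` in closed form: `R(a,b)c = DΓ(a)(b,c) - DΓ(b)(a,c) + Γ(a,Γ(b,c)) -
Γ(b,Γ(a,c))`. -/
lemma Rcurv_eq_s17 (hφ : ContDiff ℝ (⊤ : ℕ∞) φ) (hH : H = fun p => φ (pr 1 p) + al A p)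
    {a b c : V n → V n} (ha : ContDiff ℝ 2 a) (hb : ContDiff ℝ 2 b) (hc : ContDiff ℝ 2 c)
    (p : V n) {h f f' : ℝ} (hh : h = H p) (hf : f = deriv φ (p 1))
    (hf' : f' = deriv (deriv φ) (p 1)) :
    Rcurv H a b c p =
      GB A 0 (f * a p 1 + al A (a p)) (f' * a p 1) (2 * h * (f * a p 1 + al A (a p))) (b p) (c p)
      - GB A 0 (f * b p 1 + al A (b p)) (f' * b p 1) (2 * h * (f * b p 1 + al A (b p))) (a p) (c p)
      + GB A 1 h f (h ^ 2 - 1) (a p) (GB A 1 h f (h ^ 2 - 1) (b p) (c p))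
      - GB A 1 h f (h ^ 2 - 1) (b p) (GB A 1 h f (h ^ 2 - 1) (a p) (c p)) := by
  subst hh hf hf'
  obtain ⟨Γ', hΓ, hw⟩ := hasFDerivAt_Γ hφ hH p
  have key := curv_formula hΓ ha hb hc
  rw [hw, hw] at key
  rw [← key]
  have hcd : ∀ x y : V n → V n, cd H x y = fun q => fderiv ℝ y q (x q)
      + GB A 1 (H q) (deriv φ (q 1)) (H q ^ 2 - 1) (x q) (y q) := by
    intro x y
    funext q
    rw [cd, Ga_eq_s17 hφ hH]
  simp only [Rcurv, hcd, br]

lemma contDiff_H (hφ : ContDiff ℝ (⊤ : ℕ∞) φ) (hH : H = fun p => φ (pr 1 p) + al A p) :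
    ContDiff ℝ 2 H := by
  have h2 : ContDiff ℝ 2 φ := contDiff_infty.1 hφ 2
  subst hH
  exact (h2.comp (pr 1).contDiff).add (al A).contDiff

lemma contDiff_TT (hH : ContDiff ℝ 2 H) : ContDiff ℝ 2 (TT H) := by
  unfold TT; fun_prop

lemma contDiff_ZZ (hH : ContDiff ℝ 2 H) : ContDiff ℝ 2 (ZZ H) := by
  unfold ZZ; fun_prop

lemma contDiff_XX (i : Fin (n+3)) : ContDiff ℝ 2 (XX i : V n → V n) := contDiff_const

lemma TT_zero (p : V n) : TT H p 0 = (H p + 1) / 2 := by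
  simp [TT, ee_self, ee_ne one_ne_zero_fin.symm]

lemma TT_one (p : V n) : TT H p 1 = -1 := by
  simp [TT, ee_self, ee_ne one_ne_zero_fin]

lemma al_TT (p : V n) : al A (TT H p) = 0 := by
  simp [TT, al_ee, AV_zero, AV_one]

lemma ZZ_zero (p : V n) : ZZ H p 0 = (H p - 1) / 2 := by
  simp [ZZ, ee_self, ee_ne one_ne_zero_fin.symm]

lemma ZZ_one (p : V n) : ZZ H p 1 = -1 := by
  simp [ZZ, ee_self, ee_ne one_ne_zero_fin]

lemma al_ZZ (p : V n) : al A (ZZ H p) = 0 := by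
  simp [ZZ, al_ee, AV_zero, AV_one]

lemma gg_TT (p w : V n) : gg H p w (TT H p) = w 0 + (H p - 1) / 2 * w 1 := by
  have : (∑ i : Fin (n+3), if 2 ≤ (i : ℕ) then w i * TT H p i else 0) = 0 := by
    refine Finset.sum_eq_zero fun i _ => ?_
    split_ifs with hi
    · simp [TT, ee_ne (ne_zero_of_two_le hi), ee_ne (ne_one_of_two_le hi)]
    · rfl
  rw [gg, this, TT_zero, TT_one]
  ring

lemma gg_ZZ (p w : V n) : gg H p w (ZZ H p) = -w 0 - (H p + 1) / 2 * w 1 := by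
  have : (∑ i : Fin (n+3), if 2 ≤ (i : ℕ) then w i * ZZ H p i else 0) = 0 := by
    refine Finset.sum_eq_zero fun i _ => ?_
    split_ifs with hi
    · simp [ZZ, ee_ne (ne_zero_of_two_le hi), ee_ne (ne_one_of_two_le hi)]
    · rfl
  rw [gg, this, ZZ_zero, ZZ_one]
  ring

lemma gg_ee (p w : V n) {i : Fin (n+3)} (hi : 2 ≤ (i : ℕ)) : gg H p w (ee i) = w i := by
  have : (∑ j : Fin (n+3), if 2 ≤ (j : ℕ) then w j * (ee i : V n) j else 0) = w i := by
    rw [Finset.sum_eq_single i]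
    · simp [hi, ee_self]
    · intro j _ hj; simp [ee_ne hj]
    · simp
  rw [gg, this, ee_ne (ne_zero_of_two_le hi).symm, ee_ne (ne_one_of_two_le hi).symm]
  ring

/-- The frame curvatures `g(R(E,F)F,E)`, with `S = Σ_{i ≥ 2} A i ^ 2`: they are `S/4` on the plane
of `T` and `Z`, `-A i ^ 2 / 4` on the planes of `X_i` with `T` or `Z`, and `0` otherwise. -/
lemma frame_curv (hφ : ContDiff ℝ (⊤ : ℕ∞) φ) (hH : H = fun p => φ (pr 1 p) + al A p) (p : V n) :
    gg H p (Rcurv H (TT H) (TT H) (TT H) p) (TT H p) = 0 ∧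
    gg H p (Rcurv H (ZZ H) (ZZ H) (ZZ H) p) (ZZ H p) = 0 ∧
    gg H p (Rcurv H (ZZ H) (TT H) (TT H) p) (ZZ H p) = al A (AV A) / 4 ∧
    gg H p (Rcurv H (TT H) (ZZ H) (ZZ H) p) (TT H p) = al A (AV A) / 4 ∧
    (∀ i : Fin (n+3), 2 ≤ (i : ℕ) →
      gg H p (Rcurv H (XX i) (TT H) (TT H) p) (ee i) = -(1/4) * AV A i ^ 2) ∧
    (∀ i : Fin (n+3), 2 ≤ (i : ℕ) →
      gg H p (Rcurv H (XX i) (ZZ H) (ZZ H) p) (ee i) = -(1/4) * AV A i ^ 2) ∧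
    (∀ i : Fin (n+3), 2 ≤ (i : ℕ) →
      gg H p (Rcurv H (TT H) (XX i) (XX i) p) (TT H p) = -(1/4) * AV A i ^ 2) ∧
    (∀ i : Fin (n+3), 2 ≤ (i : ℕ) →
      gg H p (Rcurv H (ZZ H) (XX i) (XX i) p) (ZZ H p) = -(1/4) * AV A i ^ 2) ∧
    (∀ i j : Fin (n+3), 2 ≤ (i : ℕ) → 2 ≤ (j : ℕ) →
      gg H p (Rcurv H (XX j) (XX i) (XX i) p) (ee j) = 0) := by
  have cT := contDiff_TT (contDiff_H hφ hH)
  have cZ := contDiff_ZZ (contDiff_H hφ hH)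
  have cX := contDiff_XX (n := n)
  have e01 : (ee 0 : V n) 1 = 0 := ee_ne one_ne_zero_fin
  have e10 : (ee 1 : V n) 0 = 0 := ee_ne one_ne_zero_fin.symm
  have ei0 : ∀ i : Fin (n+3), 2 ≤ (i : ℕ) → (ee i : V n) 0 = 0 :=
    fun i hi => ee_ne (ne_zero_of_two_le hi).symm
  have ei1 : ∀ i : Fin (n+3), 2 ≤ (i : ℕ) → (ee i : V n) 1 = 0 :=
    fun i hi => ee_ne (ne_one_of_two_le hi).symm
  have e0i : ∀ i : Fin (n+3), 2 ≤ (i : ℕ) → (ee 0 : V n) i = 0 :=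
    fun i hi => ee_ne (ne_zero_of_two_le hi)
  have e1i : ∀ i : Fin (n+3), 2 ≤ (i : ℕ) → (ee 1 : V n) i = 0 :=
    fun i hi => ee_ne (ne_one_of_two_le hi)
  refine ⟨?_, ?_, ?_, ?_, fun i hi => ?_, fun i hi => ?_, fun i hi => ?_, fun i hi => ?_,
    fun i j hi hj => ?_⟩
  · rw [gg_TT, Rcurv_eq_s17 hφ hH cT cT cT p rfl rfl rfl]; simp
  · rw [gg_ZZ, Rcurv_eq_s17 hφ hH cZ cZ cZ p rfl rfl rfl]; simp
  · rw [gg_ZZ, Rcurv_eq_s17 hφ hH cZ cT cT p rfl rfl rfl]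
    simp only [Pi.sub_apply, Pi.add_apply, GB_apply, al_GB, TT_zero, TT_one, al_TT, ZZ_zero,
      ZZ_one, al_ZZ, e01, e10, ee_self, AV_zero, AV_one]
    ring
  · rw [gg_TT, Rcurv_eq_s17 hφ hH cT cZ cZ p rfl rfl rfl]
    simp only [Pi.sub_apply, Pi.add_apply, GB_apply, al_GB, TT_zero, TT_one, al_TT, ZZ_zero,
      ZZ_one, al_ZZ, e01, e10, ee_self, AV_zero, AV_one]
    ring
  · rw [gg_ee p _ hi, Rcurv_eq_s17 hφ hH (cX i) cT cT p rfl rfl rfl]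
    simp only [Pi.sub_apply, Pi.add_apply, GB_apply, al_GB, TT_zero, TT_one, al_TT, XX, al_ee,
      ei0 i hi, ei1 i hi, e0i i hi, e1i i hi, e01, e10, ee_self, AV_zero, AV_one]
    ring
  · rw [gg_ee p _ hi, Rcurv_eq_s17 hφ hH (cX i) cZ cZ p rfl rfl rfl]
    simp only [Pi.sub_apply, Pi.add_apply, GB_apply, al_GB, ZZ_zero, ZZ_one, al_ZZ, XX, al_ee,
      ei0 i hi, ei1 i hi, e0i i hi, e1i i hi, e01, e10, ee_self, AV_zero, AV_one]
    ring
  · rw [gg_TT, Rcurv_eq_s17 hφ hH cT (cX i) (cX i) p rfl rfl rfl]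
    simp only [Pi.sub_apply, Pi.add_apply, GB_apply, al_GB, TT_zero, TT_one, al_TT, XX, al_ee,
      ei0 i hi, ei1 i hi, e01, e10, ee_self, AV_zero, AV_one]
    ring
  · rw [gg_ZZ, Rcurv_eq_s17 hφ hH cZ (cX i) (cX i) p rfl rfl rfl]
    simp only [Pi.sub_apply, Pi.add_apply, GB_apply, al_GB, ZZ_zero, ZZ_one, al_ZZ, XX, al_ee,
      ei0 i hi, ei1 i hi, e01, e10, ee_self, AV_zero, AV_one]
    ring
  · rw [gg_ee p _ hj, Rcurv_eq_s17 hφ hH (cX j) (cX i) (cX i) p rfl rfl rfl]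
    simp only [Pi.sub_apply, Pi.add_apply, GB_apply, al_GB, XX, al_ee,
      ei0 i hi, ei1 i hi, ei0 j hj, ei1 j hj, e0i j hj, e1i j hj, e01, e10, ee_self]
    ring

lemma al_AV (A : Fin (n+3) → ℝ) :
    al A (AV A) = ∑ i : Fin (n+3), if 2 ≤ (i : ℕ) then A i ^ 2 else 0 := by
  rw [al_apply]
  refine Finset.sum_congr rfl fun i _ => ?_
  simp only [AV]
  split_ifs <;> ring

/-- A sum over the `X_i` directions whose terms are `-A i ^ 2 / 4`. -/
lemma sum_of_eq_AV {F : Fin (n+3) → ℝ}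
    (hF : ∀ i : Fin (n+3), 2 ≤ (i : ℕ) → F i = -(1/4) * AV A i ^ 2) :
    (∑ i : Fin (n+3), if 2 ≤ (i : ℕ) then F i else 0) = -(1/4) * al A (AV A) := by
  rw [al_apply, Finset.mul_sum]
  refine Finset.sum_congr rfl fun i _ => ?_
  split_ifs with hi
  · rw [hF i hi]; ring
  · simp [AV, hi]

end Main

/-- If `H(v,u,x³,…,xⁿ) = φ(u) + Σᵢ aᵢ xⁱ` with `φ` smooth and the `aᵢ`
real constants not all zero, then the scalar curvature is the constant `−(1/2)Σᵢ aᵢ²`,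
which is strictly negative: the standard Riemannian dual metric has constant negative
scalar curvature. -/
theorem stmt_17 (n : ℕ) (φ : ℝ → ℝ) (hφ : ContDiff ℝ (⊤ : ℕ∞) φ)
    (A : Fin (n+3) → ℝ) (hA : ∃ i : Fin (n+3), 2 ≤ (i : ℕ) ∧ A i ≠ 0)
    (H : V n → ℝ)
    (hHdef : ∀ p : V n,
      H p = φ (p 1) + ∑ i : Fin (n+3), (if 2 ≤ (i : ℕ) then A i * p i else 0)) :
    (∀ p : V n,
      scal H p = -(1/2) * ∑ i : Fin (n+3), (if 2 ≤ (i : ℕ) then (A i)^2 else 0)) ∧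
    -(1/2) * (∑ i : Fin (n+3), (if 2 ≤ (i : ℕ) then (A i)^2 else 0)) < 0 := by
  have hH := H_eq hHdef
  constructor
  · intro p
    obtain ⟨hTT, hZZ, hZT, hTZ, hXT, hXZ, hTX, hZX, hXX⟩ := frame_curv hφ hH p
    have hRT : Ric H (TT H) (TT H) p = 0 := by
      rw [Ric, hTT, hZT, sum_of_eq_AV hXT]; ring
    have hRZ : Ric H (ZZ H) (ZZ H) p = 0 := by
      rw [Ric, hZZ, hTZ, sum_of_eq_AV hXZ]; ring
    have hRX : ∀ i : Fin (n+3), 2 ≤ (i : ℕ) →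
        Ric H (XX i) (XX i) p = 2 * (-(1/4) * AV A i ^ 2) := by
      intro i hi
      have h0 : (∑ j : Fin (n+3),
          if 2 ≤ (j : ℕ) then gg H p (Rcurv H (XX j) (XX i) (XX i) p) (ee j) else 0) = 0 := by
        refine Finset.sum_eq_zero fun j _ => ?_
        split_ifs with hj
        · exact hXX i j hi hj
        · rfl
      rw [Ric, hTX i hi, hZX i hi, h0]; ring
    have hsum : (∑ i : Fin (n+3), if 2 ≤ (i : ℕ) then Ric H (XX i) (XX i) p else 0)
        = 2 * (-(1/4) * al A (AV A)) := by
      rw [← sum_of_eq_AV (A := A) (F := fun i => -(1/4) * AV A i ^ 2) (fun _ _ => rfl),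
        Finset.mul_sum]
      refine Finset.sum_congr rfl fun i _ => ?_
      split_ifs with hi
      · exact hRX i hi
      · simp
    rw [scal, hRT, hRZ, hsum, al_AV]; ring
  · obtain ⟨i, hi, hAi⟩ := hA
    have hpos : 0 < ∑ i : Fin (n+3), (if 2 ≤ (i : ℕ) then (A i)^2 else 0) := by
      refine Finset.sum_pos' (fun j _ => ?_) ⟨i, Finset.mem_univ i, ?_⟩
      · split_ifs <;> positivity
      · rw [if_pos hi]; positivity
    linarith
end
end
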